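/- Let ξ ∈ (0,1] be a constant. There exist constants C₀, C₁ > 0 (depending only on ξ) such that the following holds: if G is a d-regular graph on n vertices with d = n^ξ, and G satisfies the δ-small-set α-bipartite density condition for some α ∈ (√d, d] with α ≤ d/(C₀·(log d)²) and some δ ∈ (0,1] with δ ≥ C₀·α/d, then the standard mixing time satisfies τ_{1/3}(P) ≤ C₁·log n / log(d/α). -/

import Mathlib

open Finset

/-- The random-walk matrix `P = A/d` of a graph `G` (intended: `d`-regular). -/
noncomputable def walkMatrix {n : ℕ} (G : SimpleGraph (Fin n)) [DecidableRel G.Adj]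
    (d : ℕ) : Matrix (Fin n) (Fin n) ℝ :=
  (d : ℝ)⁻¹ • G.adjMatrix ℝ

/-- `p` is a probability distribution on `Fin n`. -/
def IsProbDist {n : ℕ} (p : Fin n → ℝ) : Prop :=
  (∀ v, 0 ≤ p v) ∧ ∑ v, p v = 1

/-- Total variation distance of `p` from the uniform distribution on `Fin n`. -/
noncomputable def tvFromUniform {n : ℕ} (p : Fin n → ℝ) : ℝ :=
  (1 / 2) * ∑ v, |p v - 1 / (n : ℝ)|

/-- `d_TV(t)`: worst-case total variation distance from uniform after `t` steps
of the random walk. -/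
noncomputable def dTV {n : ℕ} (G : SimpleGraph (Fin n)) [DecidableRel G.Adj]
    (d t : ℕ) : ℝ :=
  sSup {x : ℝ | ∃ p : Fin n → ℝ, IsProbDist p ∧
    x = tvFromUniform ((walkMatrix G d ^ t).mulVec p)}

/-- The `ε`-mixing time `τ_ε(P)`. -/
noncomputable def mixingTime {n : ℕ} (G : SimpleGraph (Fin n)) [DecidableRel G.Adj]
    (d : ℕ) (ε : ℝ) : ℕ :=
  sInf {t : ℕ | dTV G d t ≤ ε}

/-- `|E(S,T)|`: the number of ordered edges `(u,v)` with `u ∈ S`, `v ∈ T`, `uv ∈ E`. -/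
def bipCount {n : ℕ} (G : SimpleGraph (Fin n)) [DecidableRel G.Adj]
    (S T : Finset (Fin n)) : ℕ :=
  ((S ×ˢ T).filter (fun e => G.Adj e.1 e.2)).card

/-- The `α`-bipartite density condition. -/
def BipDensity {n : ℕ} (G : SimpleGraph (Fin n)) [DecidableRel G.Adj]
    (d : ℕ) (α : ℝ) : Prop :=
  ∀ S T : Finset (Fin n),
    (bipCount G S T : ℝ) ≤ d * S.card * T.card / n + α * Real.sqrt (S.card * T.card)

/-- The `δ`-small-set `α`-bipartite density condition. -/
def SmallSetBipDensity {n : ℕ} (G : SimpleGraph (Fin n)) [DecidableRel G.Adj]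
    (d : ℕ) (α δ : ℝ) : Prop :=
  ∀ S T : Finset (Fin n), (S.card : ℝ) ≤ δ * n → (T.card : ℝ) ≤ δ * n →
    (bipCount G S T : ℝ) ≤ d * S.card * T.card / n + α * Real.sqrt (S.card * T.card)

/-!
Write `β = α / d` and `N` for the number of vertices, and split a distribution at the level
`1 / (β N)`. At most `β N` vertices lie above the level, so the density condition applies to them,
and there the random term `β √(|S| |T|)` dominates the expected one. Hence one step multiplies the
weak `ℓ²` quasi-norm of the part above the level by at most `2 β` times a harmonic sum, and
`O(log N / log (1 / β))` steps make that part negligible. The part below the level is nearly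
equidistributed by a single further step: few vertices send much more than the average into a given
set, and they carry little mass because the density is at most `1 / (β N)`.
-/

section FinsetSums

variable {ι : Type*}

/-- `f` has weak `ℓ²` quasi-norm at most `W` on `S`, in the form dual to its distribution function:
subsets of `S` carry mass at most `W` times the square root of their size. A step of
the walk contracts the large values of a distribution in this quasi-norm. -/
def WeakL2On (S : Finset ι) (f : ι → ℝ) (W : ℝ) : Prop :=
  ∀ T ⊆ S, ∑ i ∈ T, f i ≤ W * √(#T : ℝ)

lemma WeakL2On.mono_set {S T : Finset ι} {f : ι → ℝ} {W : ℝ} (h : WeakL2On S f W) (hTS : T ⊆ S) :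
    WeakL2On T f W :=
  fun U hU => h U (hU.trans hTS)

lemma WeakL2On.exists_mul_le_div_card {S : Finset ι} {f g : ι → ℝ} {D W : ℝ} (hS : S.Nonempty)
    (hf₀ : ∀ i ∈ S, 0 ≤ f i) (hg₀ : ∀ i ∈ S, 0 ≤ g i) (hf : WeakL2On S f D)
    (hg : WeakL2On S g W) : ∃ i ∈ S, f i * g i ≤ D * W / #S := by
  have hcard : (0 : ℝ) < #S := by exact_mod_cast hS.card_pos
  set r : ι → ℝ := fun i => √(f i * g i)
  have hr : ∀ i ∈ S, r i ^ 2 = f i * g i := fun i hi =>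
    Real.sq_sqrt (mul_nonneg (hf₀ i hi) (hg₀ i hi))
  obtain ⟨i, hi, hle⟩ : ∃ i ∈ S, r i ≤ (∑ j ∈ S, r j) / #S :=
    exists_le_of_sum_le hS (by rw [sum_const, nsmul_eq_mul, mul_div_cancel₀ _ hcard.ne'])
  refine ⟨i, hi, ?_⟩
  have hfS := hf S subset_rfl
  have hgS := hg S subset_rfl
  calc f i * g i = r i ^ 2 := (hr i hi).symm
    _ ≤ ((∑ j ∈ S, r j) / #S) ^ 2 := pow_le_pow_left₀ (Real.sqrt_nonneg _) hle 2
    _ = (∑ j ∈ S, r j) ^ 2 / (#S : ℝ) ^ 2 := div_pow _ _ _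
    _ ≤ (∑ j ∈ S, f j) * (∑ j ∈ S, g j) / (#S : ℝ) ^ 2 := by
        gcongr
        exact sum_sq_le_sum_mul_sum_of_sq_le_mul S hf₀ hg₀ fun j hj => (hr j hj).le
    _ ≤ (D * √(#S : ℝ)) * (W * √(#S : ℝ)) / (#S : ℝ) ^ 2 := by
        gcongr
        exacts [sum_nonneg hg₀, (sum_nonneg hf₀).trans hfS]
    _ = D * W / #S := by
        rw [mul_mul_mul_comm, Real.mul_self_sqrt hcard.le]
        field_simp

lemma WeakL2On.sum_mul_le_harmonic {S : Finset ι} {f g : ι → ℝ} {D W : ℝ}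
    (hf₀ : ∀ i ∈ S, 0 ≤ f i) (hg₀ : ∀ i ∈ S, 0 ≤ g i) (hf : WeakL2On S f D)
    (hg : WeakL2On S g W) : ∑ i ∈ S, f i * g i ≤ D * W * harmonic #S := by
  classical
  induction hk : #S generalizing S with
  | zero => simp [card_eq_zero.mp hk]
  | succ k ih =>
    obtain ⟨i, hi, hle⟩ := hf.exists_mul_le_div_card (card_pos.mp (hk ▸ k.succ_pos)) hf₀ hg₀ hg
    have hsub := erase_subset i S
    have hrest := ih (fun j hj => hf₀ j (hsub hj)) (fun j hj => hg₀ j (hsub hj)) (hf.mono_set hsub)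
      (hg.mono_set hsub) (by rw [card_erase_of_mem hi, hk, Nat.add_sub_cancel])
    calc ∑ j ∈ S, f j * g j = f i * g i + ∑ j ∈ S.erase i, f j * g j :=
          (add_sum_erase S _ hi).symm
      _ ≤ D * W / #S + D * W * harmonic k := add_le_add hle hrest
      _ = D * W * harmonic (k + 1) := by
          rw [hk, harmonic_succ]
          push_cast
          ring

/-- Split `T` into blocks of size `m` and a remainder. -/
lemma sum_le_of_forall_card_le {f : ι → ℝ} {m : ℕ} {X : ℝ} (hm : 0 < m)
    (h : ∀ S : Finset ι, #S ≤ m → ∑ i ∈ S, f i ≤ X) (T : Finset ι) :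
    ∑ i ∈ T, f i ≤ ((#T : ℝ) / m + 1) * X := by
  classical
  have hX : 0 ≤ X := by simpa using h ∅ (by simp)
  induction T using Finset.strongInduction with
  | H T ih =>
    rcases le_or_gt #T m with hle | hgt
    · refine (h T hle).trans (le_mul_of_one_le_left hX ?_)
      exact le_add_of_nonneg_left (by positivity)
    · obtain ⟨S, hST, hS⟩ := exists_subset_card_eq hgt.le
      have hrest := ih (T \ S) (sdiff_ssubset hST (card_pos.mp (hS ▸ hm)))
      rw [cast_card_sdiff hST, hS] at hrest
      calc ∑ i ∈ T, f i = ∑ i ∈ T \ S, f i + ∑ i ∈ S, f i := (sum_sdiff hST).symm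
        _ ≤ (((#T : ℝ) - m) / m + 1) * X + X := add_le_add hrest (h S hS.le)
        _ = ((#T : ℝ) / m + 1) * X := by field_simp; ring

lemma card_le_of_forall_subset_card_le {B : Finset ι} {x : ℝ} (hx : 1 ≤ x)
    (h : ∀ S ⊆ B, (#S : ℝ) ≤ 2 * x → (#S : ℝ) ≤ x) : (#B : ℝ) ≤ x := by
  by_contra! hlt
  have hx₀ : 0 ≤ x := zero_le_one.trans hx
  obtain ⟨S, hSB, hS⟩ := exists_subset_card_eq
    (show ⌊x⌋₊ + 1 ≤ #B from (Nat.floor_lt hx₀).mpr hlt)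
  have hScard : (#S : ℝ) = ⌊x⌋₊ + 1 := by rw [hS]; push_cast; rfl
  have hSle := h S hSB (by linarith [Nat.floor_le hx₀])
  linarith [Nat.lt_floor_add_one x]

end FinsetSums

section Excess

variable {ι : Type*} {c : ℝ} {p : ι → ℝ}

/-- The part of `p` above the level `c`, to which the contraction in weak `ℓ²` applies. -/
def excess (c : ℝ) (p : ι → ℝ) : ι → ℝ := fun v => (p v - c)⁺

lemma excess_nonneg (c : ℝ) (p : ι → ℝ) (v : ι) : 0 ≤ excess c p v :=
  posPart_nonneg _

lemma lt_of_excess_ne_zero {v : ι} (h : excess c p v ≠ 0) : c < p v := by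
  contrapose! h
  exact posPart_eq_zero.mpr (sub_nonpos.mpr h)

lemma min_add_excess (c : ℝ) (p : ι → ℝ) : (fun v => min (p v) c) + excess c p = p := by
  funext v
  rcases le_total (p v) c with h | h
  · simp only [Pi.add_apply, excess, min_eq_left h, posPart_of_nonpos (sub_nonpos.mpr h), add_zero]
  · simp only [Pi.add_apply, excess, min_eq_right h, posPart_of_nonneg (sub_nonneg.mpr h),
      add_sub_cancel]

variable [Fintype ι]

lemma card_filter_lt_le_inv (hp : p ∈ stdSimplex ℝ ι) (hc : 0 < c) (S : Finset ι) :
    (#{v ∈ S | c < p v} : ℝ) ≤ c⁻¹ := by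
  rw [← one_div, le_div_iff₀ hc, ← hp.2, ← nsmul_eq_mul]
  exact (card_nsmul_le_sum _ _ _ fun v hv => (mem_filter.mp hv).2.le).trans
    (sum_le_sum_of_subset_of_nonneg (subset_univ _) fun v _ _ => hp.1 v)

lemma weakL2On_excess (hp : p ∈ stdSimplex ℝ ι) (hc : 0 ≤ c) (S : Finset ι) :
    WeakL2On S (excess c p) 1 := by
  intro T _
  rcases T.eq_empty_or_nonempty with rfl | hT
  · simp
  calc ∑ v ∈ T, excess c p v ≤ ∑ v ∈ T, p v :=
        sum_le_sum fun v _ => max_le (sub_le_self _ hc) (hp.1 v)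
    _ ≤ ∑ v, p v := sum_le_sum_of_subset_of_nonneg (subset_univ _) fun v _ _ => hp.1 v
    _ = 1 := hp.2
    _ ≤ 1 * √(#T : ℝ) := by
        rw [one_mul, Real.one_le_sqrt]
        exact_mod_cast hT.card_pos

end Excess

section Stochastic

open Matrix

variable {ι : Type*} [Fintype ι] [DecidableEq ι] {M : Matrix ι ι ℝ} {p : ι → ℝ}

lemma excess_mulVec_le (hM : M ∈ rowStochastic ℝ ι) (c : ℝ) (p : ι → ℝ) (v : ι) :
    excess c (M *ᵥ p) v ≤ (M *ᵥ excess c p) v := by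
  refine max_le ?_ (nonneg_mulVec_of_mem_rowStochastic hM (excess_nonneg c p) v)
  calc (M *ᵥ p) v - c = ∑ u, M v u * (p u - c) := by
        simp only [mul_sub, sum_sub_distrib, ← sum_mul, sum_row_of_mem_rowStochastic hM, one_mul,
          mulVec, dotProduct]
    _ ≤ ∑ u, M v u * excess c p u := sum_le_sum fun u _ =>
        mul_le_mul_of_nonneg_left (le_posPart _) (nonneg_of_mem_rowStochastic hM)

lemma mulVec_mem_stdSimplex (hM : M ∈ colStochastic ℝ ι) (hp : p ∈ stdSimplex ℝ ι) :
    M *ᵥ p ∈ stdSimplex ℝ ι :=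
  ⟨nonneg_mulVec_of_mem_colStochastic hM hp.1, by rw [sum_mulVec_of_mem_colStochastic hM, hp.2]⟩

end Stochastic

lemma div_floor_mul_add_one_le {x y δ : ℝ} (hxy : x ≤ y) (hδ : 0 < δ) (hδ₁ : δ ≤ 1)
    (hδy : 1 ≤ δ * y) : x / ⌊δ * y⌋₊ + 1 ≤ 3 / δ := by
  have hfloor₁ : (1 : ℝ) ≤ ⌊δ * y⌋₊ := by exact_mod_cast Nat.floor_pos.mpr hδy
  have hfloor : δ * y / 2 ≤ ⌊δ * y⌋₊ := by linarith [Nat.lt_floor_add_one (δ * y)]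
  have hfull : x / ⌊δ * y⌋₊ ≤ 2 / δ := by
    rw [div_le_div_iff₀ (by linarith) hδ]
    linarith [mul_le_mul_of_nonneg_right hxy hδ.le]
  calc x / ⌊δ * y⌋₊ + 1 ≤ 2 / δ + 1 / δ := add_le_add hfull ((one_le_div hδ).mpr hδ₁)
    _ = 3 / δ := by ring

section Density

open Matrix

variable {ι : Type*}

/-- The mass that one step of the chain with transition matrix `M`, acting on column vectors, sends
from `u` into `T`. -/
def massInto (M : Matrix ι ι ℝ) (T : Finset ι) (u : ι) : ℝ := ∑ v ∈ T, M v u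

variable [Fintype ι]

lemma sum_mulVec_eq_sum_massInto_mul (M : Matrix ι ι ℝ) (T : Finset ι) (q : ι → ℝ) :
    ∑ v ∈ T, (M *ᵥ q) v = ∑ u, massInto M T u * q u := by
  simp only [mulVec, dotProduct, massInto, sum_mul]
  exact sum_comm

/-- The small-set bipartite density condition for a matrix: the normalization of
`SmallSetBipDensity` in which the walk matrix of a `d`-regular graph has `β = α / d`. -/
def SmallSetDense (M : Matrix ι ι ℝ) (β δ : ℝ) : Prop :=
  ∀ S T : Finset ι, (#S : ℝ) ≤ δ * Fintype.card ι → (#T : ℝ) ≤ δ * Fintype.card ι →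
    ∑ u ∈ S, massInto M T u ≤ #S * #T / Fintype.card ι + β * √(#S * #T)

namespace SmallSetDense

variable {M : Matrix ι ι ℝ} {β δ : ℝ}

lemma anti {δ' : ℝ} (h : SmallSetDense M β δ) (hδ : δ' ≤ δ) : SmallSetDense M β δ' :=
  fun S T hS hT => h S T (hS.trans (by gcongr)) (hT.trans (by gcongr))

/-- On sets of size at most `β * N` the random term of the density condition dominates. -/
lemma weakL2On_massInto (h : SmallSetDense M β δ) (hβ : 0 ≤ β) (hβδ : β ≤ δ) {S T : Finset ι}
    (hS : (#S : ℝ) ≤ β * Fintype.card ι) (hT : (#T : ℝ) ≤ β * Fintype.card ι) :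
    WeakL2On S (massInto M T) (2 * β * √(#T : ℝ)) := by
  intro U hUS
  have hU : (#U : ℝ) ≤ β * Fintype.card ι := (Nat.cast_le.mpr (card_le_card hUS)).trans hS
  have hβN : 0 ≤ β * Fintype.card ι := (Nat.cast_nonneg _).trans hT
  have hδN : β * Fintype.card ι ≤ δ * Fintype.card ι := by gcongr
  have hgeom : √(#U * #T) ≤ β * Fintype.card ι :=
    Real.sqrt_le_iff.mpr ⟨hβN, by rw [sq]; gcongr⟩
  have hexp : (#U * #T / Fintype.card ι : ℝ) ≤ β * √(#U * #T) := by
    refine div_le_of_le_mul₀ (Nat.cast_nonneg _) (by positivity) ?_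
    calc (#U * #T : ℝ) = √(#U * #T) * √(#U * #T) := (Real.mul_self_sqrt (by positivity)).symm
      _ ≤ β * Fintype.card ι * √(#U * #T) := by gcongr
      _ = β * √(#U * #T) * Fintype.card ι := by ring
  calc ∑ u ∈ U, massInto M T u ≤ #U * #T / Fintype.card ι + β * √(#U * #T) :=
        h U T (hU.trans hδN) (hT.trans hδN)
    _ ≤ 2 * (β * √(#U * #T)) := by linarith
    _ = 2 * β * √(#T : ℝ) * √(#U : ℝ) := by rw [Real.sqrt_mul (by positivity)]; ring

lemma sum_massInto_sub_le (h : SmallSetDense M β δ) (hβ : 0 ≤ β) {S T : Finset ι}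
    (hS : (#S : ℝ) ≤ δ * Fintype.card ι) (hT : (#T : ℝ) ≤ δ * Fintype.card ι) :
    ∑ u ∈ S, (massInto M T u - #T / Fintype.card ι) ≤ β * √(#S * (δ * Fintype.card ι)) := by
  have hroot : β * √(#S * #T) ≤ β * √(#S * (δ * Fintype.card ι)) := by gcongr
  rw [sum_sub_distrib, sum_const, nsmul_eq_mul, ← mul_div_assoc]
  linarith [h S T hS hT]

lemma sum_massInto_sub_le_of_card_le (h : SmallSetDense M β δ) (hβ : 0 ≤ β) (hβδ : β ≤ δ)
    {S T : Finset ι} (hS : (#S : ℝ) ≤ β * Fintype.card ι) (hT : (#T : ℝ) ≤ δ * Fintype.card ι) :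
    ∑ u ∈ S, (massInto M T u - #T / Fintype.card ι) ≤ β * Fintype.card ι * √(β * δ) := by
  set N : ℝ := (Fintype.card ι : ℝ)
  have hN : 0 ≤ N := Nat.cast_nonneg _
  have hδ : 0 ≤ δ := hβ.trans hβδ
  calc ∑ u ∈ S, (massInto M T u - #T / N) ≤ β * √(#S * (δ * N)) :=
        h.sum_massInto_sub_le hβ (hS.trans (by gcongr)) hT
    _ ≤ β * √(β * N * (δ * N)) := by gcongr
    _ = β * N * √(β * δ) := by
        rw [show β * N * (δ * N) = N ^ 2 * (β * δ) by ring, Real.sqrt_mul (sq_nonneg N),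
          Real.sqrt_sq hN, mul_assoc]

lemma card_filter_lt_massInto_le (h : SmallSetDense M β δ) (hβN : 1 ≤ β * Fintype.card ι)
    (hβδ : 2 * β ≤ δ) {T : Finset ι} (hT : (#T : ℝ) ≤ δ * Fintype.card ι) :
    (#{u | #T / Fintype.card ι + √(β * δ) < massInto M T u} : ℝ) ≤ β * Fintype.card ι := by
  have hβ : 0 < β := pos_of_mul_pos_left (one_pos.trans_le hβN) (Nat.cast_nonneg _)
  refine card_le_of_forall_subset_card_le hβN fun S hSB hS => ?_
  rcases S.eq_empty_or_nonempty with rfl | hne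
  · simpa using zero_le_one.trans hβN
  have hδ : 0 < δ := by linarith
  have hSδ : (#S : ℝ) ≤ δ * Fintype.card ι := hS.trans (by rw [← mul_assoc]; gcongr)
  have hle : #S * √(β * δ) ≤ β * √(#S * (δ * Fintype.card ι)) := by
    refine le_trans ?_ (h.sum_massInto_sub_le hβ.le hSδ hT)
    rw [← nsmul_eq_mul]
    refine card_nsmul_le_sum _ _ _ fun u hu => ?_
    linarith [(mem_filter.mp (hSB hu)).2]
  have hsq := pow_le_pow_left₀ (by positivity) hle 2
  rw [mul_pow, mul_pow, Real.sq_sqrt (by positivity), Real.sq_sqrt (by positivity)] at hsq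
  refine le_of_mul_le_mul_left (a := #S * (β * δ)) ?_ (by positivity)
  linarith

lemma sum_mulVec_le_of_card_le (h : SmallSetDense M β δ) (hβN : 1 ≤ β * Fintype.card ι)
    (hβδ : 2 * β ≤ δ) {q : ι → ℝ} (hq₀ : ∀ u, 0 ≤ q u) (hq₁ : ∑ u, q u ≤ 1)
    (hq : ∀ u, q u ≤ (β * Fintype.card ι)⁻¹) {T : Finset ι}
    (hT : (#T : ℝ) ≤ δ * Fintype.card ι) :
    ∑ v ∈ T, (M *ᵥ q) v ≤ #T / Fintype.card ι + 2 * √(β * δ) := by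
  classical
  set N : ℝ := (Fintype.card ι : ℝ)
  set D : ℝ := #T / N
  set s : ℝ := √(β * δ)
  set B : Finset ι := {u | D + s < massInto M T u}
  have hN : 0 ≤ N := Nat.cast_nonneg _
  have hβ : 0 < β := pos_of_mul_pos_left (one_pos.trans_le hβN) (Nat.cast_nonneg _)
  have hB : (#B : ℝ) ≤ β * N := h.card_filter_lt_massInto_le hβN hβδ hT
  have hsplit : ∀ u, massInto M T u * q u
      ≤ (D + s) * q u + if u ∈ B then (β * N)⁻¹ * (massInto M T u - D) else 0 := by
    intro u
    split_ifs with hu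
    · have hlt : D + s < massInto M T u := (mem_filter.mp hu).2
      have hs : 0 ≤ s := Real.sqrt_nonneg _
      have := mul_le_mul_of_nonneg_right (hq u) (show 0 ≤ massInto M T u - D by linarith)
      linarith [mul_nonneg hs (hq₀ u)]
    · have hle : massInto M T u ≤ D + s := not_lt.mp fun hlt => hu (by simp [B, hlt])
      linarith [mul_le_mul_of_nonneg_right hle (hq₀ u)]
  have hheavy : (β * N)⁻¹ * ∑ u ∈ B, (massInto M T u - D) ≤ s := by
    rw [inv_mul_le_iff₀ (by linarith)]
    exact h.sum_massInto_sub_le_of_card_le hβ.le (by linarith) hB hT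
  have hDs : 0 ≤ D + s := by positivity
  calc ∑ v ∈ T, (M *ᵥ q) v = ∑ u, massInto M T u * q u := sum_mulVec_eq_sum_massInto_mul M T q
    _ ≤ ∑ u, ((D + s) * q u + if u ∈ B then (β * N)⁻¹ * (massInto M T u - D) else 0) :=
        sum_le_sum fun u _ => hsplit u
    _ = (D + s) * ∑ u, q u + (β * N)⁻¹ * ∑ u ∈ B, (massInto M T u - D) := by
        rw [sum_add_distrib, ← mul_sum, Fintype.sum_ite_mem, ← mul_sum]
    _ ≤ (D + s) * 1 + s := by gcongr
    _ = D + 2 * s := by ring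

lemma sum_mulVec_le (h : SmallSetDense M β δ) (hβN : 1 ≤ β * Fintype.card ι)
    (hβδ : 2 * β ≤ δ) (hδ₁ : δ ≤ 1) {q : ι → ℝ} (hq₀ : ∀ u, 0 ≤ q u)
    (hq₁ : ∑ u, q u ≤ 1) (hq : ∀ u, q u ≤ (β * Fintype.card ι)⁻¹) (T : Finset ι) :
    ∑ v ∈ T, (M *ᵥ q) v ≤ #T / Fintype.card ι + 6 * √(β / δ) := by
  set N : ℝ := (Fintype.card ι : ℝ) with hN
  set m : ℕ := ⌊δ * N⌋₊
  have hβ : 0 < β := pos_of_mul_pos_left (one_pos.trans_le hβN) (Nat.cast_nonneg _)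
  have hδ : 0 < δ := by linarith
  have hδN : 1 ≤ δ * N := hβN.trans (by gcongr; linarith)
  have hm : 0 < m := Nat.floor_pos.mpr hδN
  have hmδ : (m : ℝ) ≤ δ * N := Nat.floor_le (by linarith)
  have hblock : ∀ S : Finset ι, #S ≤ m → ∑ v ∈ S, ((M *ᵥ q) v - 1 / N) ≤ 2 * √(β * δ) := by
    intro S hS
    have := h.sum_mulVec_le_of_card_le hβN hβδ hq₀ hq₁ hq ((Nat.cast_le.mpr hS).trans hmδ)
    rw [sum_sub_distrib, sum_const, nsmul_eq_mul, mul_one_div]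
    linarith
  have hblocks : (#T : ℝ) / m + 1 ≤ 3 / δ :=
    div_floor_mul_add_one_le (by rw [hN]; exact_mod_cast card_le_univ T) hδ hδ₁ hδN
  have hroot : √(β * δ) = δ * √(β / δ) := by
    rw [show β * δ = δ ^ 2 * (β / δ) by field_simp, Real.sqrt_mul (sq_nonneg δ), Real.sqrt_sq hδ.le]
  have hsum := calc ∑ v ∈ T, ((M *ᵥ q) v - 1 / N)
      ≤ ((#T : ℝ) / m + 1) * (2 * √(β * δ)) := sum_le_of_forall_card_le hm hblock T
    _ ≤ 3 / δ * (2 * √(β * δ)) := by gcongr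
    _ = 6 * √(β / δ) := by rw [hroot]; field_simp; norm_num
  rw [sum_sub_distrib, sum_const, nsmul_eq_mul, mul_one_div] at hsum
  linarith

variable [DecidableEq ι] {p : ι → ℝ}

lemma weakL2On_excess_mulVec (h : SmallSetDense M β δ) (hM : M ∈ doublyStochastic ℝ ι)
    (hβN : 0 < β * Fintype.card ι) (hβδ : β ≤ δ) (hp : p ∈ stdSimplex ℝ ι) {W : ℝ} (hW : 0 ≤ W)
    (hpW : WeakL2On univ (excess (β * Fintype.card ι)⁻¹ p) W) :
    WeakL2On univ (excess (β * Fintype.card ι)⁻¹ (M *ᵥ p))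
      (2 * β * (1 + Real.log (Fintype.card ι)) * W) := by
  intro T _
  obtain ⟨hrow, hcol⟩ := mem_doublyStochastic_iff_mem_rowStochastic_and_mem_colStochastic.mp hM
  set c : ℝ := (β * Fintype.card ι)⁻¹
  have hβ : 0 ≤ β := (pos_of_mul_pos_left hβN (Nat.cast_nonneg _)).le
  set H : Finset ι := {u | c < p u}
  set K : Finset ι := {v ∈ T | c < (M *ᵥ p) v}
  have hH : (#H : ℝ) ≤ β * Fintype.card ι :=
    (card_filter_lt_le_inv hp (inv_pos.mpr hβN) univ).trans_eq (inv_inv _)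
  have hK : (#K : ℝ) ≤ β * Fintype.card ι :=
    (card_filter_lt_le_inv (mulVec_mem_stdSimplex hcol hp) (inv_pos.mpr hβN) T).trans_eq
      (inv_inv _)
  have hmass : ∀ u, 0 ≤ massInto M K u := fun u =>
    sum_nonneg fun v _ => nonneg_of_mem_doublyStochastic hM
  have hharm : (harmonic #H : ℝ) ≤ 1 + Real.log (Fintype.card ι) := by
    refine le_trans ?_ (harmonic_le_one_add_log _)
    exact_mod_cast sum_le_sum_of_subset_of_nonneg (range_mono (card_le_univ H))
      fun i _ _ => by positivity
  calc ∑ v ∈ T, excess c (M *ᵥ p) v = ∑ v ∈ K, excess c (M *ᵥ p) v :=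
        (sum_filter_of_ne fun v _ => lt_of_excess_ne_zero).symm
    _ ≤ ∑ v ∈ K, (M *ᵥ excess c p) v := sum_le_sum fun v _ => excess_mulVec_le hrow c p v
    _ = ∑ u, massInto M K u * excess c p u := sum_mulVec_eq_sum_massInto_mul M K _
    _ = ∑ u ∈ H, massInto M K u * excess c p u :=
        (sum_filter_of_ne fun u _ hu => lt_of_excess_ne_zero (right_ne_zero_of_mul hu)).symm
    _ ≤ 2 * β * √(#K : ℝ) * W * harmonic #H :=
        (h.weakL2On_massInto hβ hβδ hH hK).sum_mul_le_harmonic (fun u _ => hmass u)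
          (fun u _ => excess_nonneg c p u) (hpW.mono_set (subset_univ H))
    _ ≤ 2 * β * √(#K : ℝ) * W * (1 + Real.log (Fintype.card ι)) := by gcongr
    _ = 2 * β * (1 + Real.log (Fintype.card ι)) * W * √(#K : ℝ) := by ring
    _ ≤ 2 * β * (1 + Real.log (Fintype.card ι)) * W * √(#T : ℝ) := by
        gcongr
        exact filter_subset (c < (M *ᵥ p) ·) T

lemma weakL2On_excess_pow_mulVec (h : SmallSetDense M β δ) (hM : M ∈ doublyStochastic ℝ ι)
    (hβN : 0 < β * Fintype.card ι) (hβδ : β ≤ δ) (hp : p ∈ stdSimplex ℝ ι) (t : ℕ) :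
    WeakL2On univ (excess (β * Fintype.card ι)⁻¹ (M ^ t *ᵥ p))
      ((2 * β * (1 + Real.log (Fintype.card ι))) ^ t) := by
  have hβ : 0 ≤ β := (pos_of_mul_pos_left hβN (Nat.cast_nonneg _)).le
  induction t with
  | zero => simpa using weakL2On_excess hp (inv_nonneg.mpr hβN.le) univ
  | succ t ih =>
    have hcol := (mem_doublyStochastic_iff_mem_rowStochastic_and_mem_colStochastic.mp
      (pow_mem hM t)).2
    have := h.weakL2On_excess_mulVec hM hβN hβδ (mulVec_mem_stdSimplex hcol hp)
      (by positivity) ih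
    rwa [mulVec_mulVec, ← pow_succ', ← pow_succ'] at this

lemma sum_pow_succ_mulVec_le (h : SmallSetDense M β δ) (hM : M ∈ doublyStochastic ℝ ι)
    (hβN : 1 ≤ β * Fintype.card ι) (hβδ : 2 * β ≤ δ) (hδ₁ : δ ≤ 1) (hp : p ∈ stdSimplex ℝ ι)
    (t : ℕ) (T : Finset ι) :
    ∑ v ∈ T, (M ^ (t + 1) *ᵥ p) v ≤ #T / Fintype.card ι
      + (6 * √(β / δ) + (2 * β * (1 + Real.log (Fintype.card ι))) ^ t * √(Fintype.card ι : ℝ)) := by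
  set N : ℝ := (Fintype.card ι : ℝ)
  have hβN₀ : 0 < β * N := zero_lt_one.trans_le hβN
  have hβ : 0 < β := pos_of_mul_pos_left hβN₀ (Nat.cast_nonneg _)
  set r : ι → ℝ := M ^ t *ᵥ p
  set q : ι → ℝ := fun v => min (r v) (β * N)⁻¹
  have hr : r ∈ stdSimplex ℝ ι := mulVec_mem_stdSimplex
    (mem_doublyStochastic_iff_mem_rowStochastic_and_mem_colStochastic.mp (pow_mem hM t)).2 hp
  have hlow : ∑ v ∈ T, (M *ᵥ q) v ≤ #T / N + 6 * √(β / δ) :=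
    h.sum_mulVec_le hβN hβδ hδ₁ (fun v => le_min (hr.1 v) (inv_nonneg.mpr hβN₀.le))
      ((sum_le_sum fun v _ => min_le_left _ _).trans_eq hr.2) (fun v => min_le_right _ _) T
  have hhigh : ∑ v ∈ T, (M *ᵥ excess (β * N)⁻¹ r) v
      ≤ (2 * β * (1 + Real.log N)) ^ t * √N := by
    obtain ⟨hrow, hcol⟩ := mem_doublyStochastic_iff_mem_rowStochastic_and_mem_colStochastic.mp hM
    calc ∑ v ∈ T, (M *ᵥ excess (β * N)⁻¹ r) v ≤ ∑ v, (M *ᵥ excess (β * N)⁻¹ r) v :=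
          sum_le_sum_of_subset_of_nonneg (subset_univ T) fun v _ _ =>
            nonneg_mulVec_of_mem_rowStochastic hrow (excess_nonneg _ r) v
      _ = ∑ v, excess (β * N)⁻¹ r v := sum_mulVec_of_mem_colStochastic hcol
      _ ≤ (2 * β * (1 + Real.log N)) ^ t * √N :=
          h.weakL2On_excess_pow_mulVec hM hβN₀ (by linarith) hp t univ subset_rfl
  calc ∑ v ∈ T, (M ^ (t + 1) *ᵥ p) v = ∑ v ∈ T, (M *ᵥ (q + excess (β * N)⁻¹ r)) v := by
        rw [min_add_excess, mulVec_mulVec, ← pow_succ']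
    _ = ∑ v ∈ T, (M *ᵥ q) v + ∑ v ∈ T, (M *ᵥ excess (β * N)⁻¹ r) v := by
        simp only [mulVec_add, Pi.add_apply, sum_add_distrib]
    _ ≤ #T / N + (6 * √(β / δ) + (2 * β * (1 + Real.log N)) ^ t * √N) := by linarith

end SmallSetDense

end Density

section Graph

open Matrix

variable {n d : ℕ}

lemma IsProbDist.tvFromUniform_le {p : Fin n → ℝ} (hp : IsProbDist p) {ε : ℝ}
    (h : ∀ T : Finset (Fin n), ∑ v ∈ T, p v ≤ #T / n + ε) : tvFromUniform p ≤ ε := by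
  have hn : (n : ℝ) ≠ 0 := by
    rintro hn
    obtain rfl : n = 0 := by exact_mod_cast hn
    simpa using hp.2
  set T : Finset (Fin n) := {v | 1 / (n : ℝ) < p v}
  have hsum : ∑ v, (p v - 1 / (n : ℝ)) = 0 := by
    simp [sum_sub_distrib, hp.2, hn]
  have habs : ∑ v, |p v - 1 / (n : ℝ)| = 2 * ∑ v, excess (1 / n) p v := by
    rw [mul_sum, ← sub_zero (∑ v, 2 * excess (1 / n) p v), ← hsum, ← sum_sub_distrib]
    refine sum_congr rfl fun v _ => ?_
    rw [excess]
    linarith [posPart_add_negPart (p v - 1 / (n : ℝ)), posPart_sub_negPart (p v - 1 / (n : ℝ))]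
  have hT : ∑ v, excess (1 / n) p v = ∑ v ∈ T, (p v - 1 / (n : ℝ)) := by
    rw [← sum_filter_of_ne fun v _ => lt_of_excess_ne_zero]
    exact sum_congr rfl fun v hv => posPart_of_nonneg (sub_nonneg.mpr (mem_filter.mp hv).2.le)
  rw [tvFromUniform, habs, hT, sum_sub_distrib, sum_const, nsmul_eq_mul, mul_one_div]
  linarith [h T]

variable {G : SimpleGraph (Fin n)} [DecidableRel G.Adj]

lemma bipCount_eq_sum_adjMatrix (S T : Finset (Fin n)) :
    (bipCount G S T : ℝ) = ∑ u ∈ S, ∑ v ∈ T, G.adjMatrix ℝ u v := by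
  rw [bipCount, card_filter, sum_product]
  push_cast
  rfl

lemma isSymm_walkMatrix : (walkMatrix G d).IsSymm :=
  (SimpleGraph.isSymm_adjMatrix G).smul _

lemma sum_massInto_walkMatrix (S T : Finset (Fin n)) :
    ∑ u ∈ S, massInto (walkMatrix G d) T u = (d : ℝ)⁻¹ * bipCount G S T := by
  simp only [bipCount_eq_sum_adjMatrix, massInto, mul_sum]
  exact sum_congr rfl fun u _ => sum_congr rfl fun v _ => isSymm_walkMatrix.apply u v

lemma walkMatrix_mem_doublyStochastic (hG : G.IsRegularOfDegree d) (hd : 0 < d) :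
    walkMatrix G d ∈ doublyStochastic ℝ (Fin n) := by
  have hnonneg : ∀ u v, 0 ≤ walkMatrix G d u v := fun u v =>
    mul_nonneg (by positivity) (by rw [SimpleGraph.adjMatrix_apply]; split_ifs <;> norm_num)
  have hrow : ∀ v, ∑ u, walkMatrix G d v u = 1 := by
    intro v
    have hdeg := SimpleGraph.adjMatrix_mulVec_const_apply_of_regular (α := ℝ) (a := 1) hG (v := v)
    simp only [mulVec, dotProduct, Function.const_apply, mul_one] at hdeg
    simp only [walkMatrix, Matrix.smul_apply, smul_eq_mul, ← mul_sum, hdeg]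
    exact inv_mul_cancel₀ (by positivity)
  refine mem_doublyStochastic_iff_sum.mpr ⟨hnonneg, hrow, fun v => ?_⟩
  rw [← hrow v]
  exact sum_congr rfl fun u _ => isSymm_walkMatrix.apply v u

lemma SmallSetBipDensity.smallSetDense {α δ : ℝ} (h : SmallSetBipDensity G d α δ) (hd : 0 < d) :
    SmallSetDense (walkMatrix G d) (α / d) δ := by
  intro S T hS hT
  rw [Fintype.card_fin] at hS hT ⊢
  have hd' : (0 : ℝ) < d := Nat.cast_pos.mpr hd
  rw [sum_massInto_walkMatrix, inv_mul_le_iff₀ hd']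
  calc (bipCount G S T : ℝ) ≤ d * #S * #T / n + α * √(#S * #T) := h S T hS hT
    _ = d * (#S * #T / n + α / d * √(#S * #T)) := by field_simp

lemma dTV_succ_le {β δ : ℝ} (hG : G.IsRegularOfDegree d) (hd : 0 < d)
    (h : SmallSetDense (walkMatrix G d) β δ) (hβn : 1 ≤ β * n) (hβδ : 2 * β ≤ δ) (hδ₁ : δ ≤ 1)
    (t : ℕ) :
    dTV G d (t + 1) ≤ 6 * √(β / δ) + (2 * β * (1 + Real.log n)) ^ t * √(n : ℝ) := by
  have hβ : 0 < β := pos_of_mul_pos_left (one_pos.trans_le hβn) (Nat.cast_nonneg _)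
  refine Real.sSup_le ?_ (by positivity)
  rintro x ⟨p, hp, rfl⟩
  have hP := walkMatrix_mem_doublyStochastic hG hd
  have hpow := (mem_doublyStochastic_iff_mem_rowStochastic_and_mem_colStochastic.mp
    (pow_mem hP (t + 1))).2
  refine IsProbDist.tvFromUniform_le (mulVec_mem_stdSimplex hpow hp) fun T => ?_
  simpa only [Fintype.card_fin] using
    h.sum_pow_succ_mulVec_le hP (by rwa [Fintype.card_fin]) hβδ hδ₁ hp t T

end Graph

section MixingTime

lemma pow_le_inv_of_log_le {x ρ β : ℝ} {t : ℕ} (hx : 0 < x) (hβ : 0 < β)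
    (hρβ : ρ ^ 2 ≤ β) (ht : 2 * Real.log x ≤ t * Real.log β⁻¹) : ρ ^ t ≤ x⁻¹ := by
  refine le_of_sq_le_sq ?_ (by positivity)
  calc (ρ ^ t) ^ 2 = (ρ ^ 2) ^ t := pow_right_comm ρ t 2
    _ ≤ β ^ t := pow_le_pow_left₀ (sq_nonneg ρ) hρβ t
    _ ≤ x⁻¹ ^ 2 := by
        rw [← Real.log_le_log_iff (by positivity) (by positivity), Real.log_pow, Real.log_pow,
          Real.log_inv]
        rw [Real.log_inv] at ht
        push_cast
        linarith

variable {n d : ℕ} {G : SimpleGraph (Fin n)} [DecidableRel G.Adj]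

lemma dTV_succ_le_of_pow_le_inv {β δ κ : ℝ} {t : ℕ} (hG : G.IsRegularOfDegree d) (hd : 0 < d)
    (h : SmallSetDense (walkMatrix G d) β δ) (hβn : 1 ≤ β * n) (hκ : 2 ≤ κ) (hκβ : κ * β ≤ 1)
    (hκδ : κ * β ≤ δ) (hdecay : (2 * β * (1 + Real.log n)) ^ t ≤ (n : ℝ)⁻¹) :
    dTV G d (t + 1) ≤ 7 / √κ := by
  have hβ : 0 < β := pos_of_mul_pos_left (one_pos.trans_le hβn) (Nat.cast_nonneg _)
  have hκn : κ ≤ n := by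
    refine le_of_mul_le_mul_left ?_ hβ
    linarith
  calc dTV G d (t + 1) ≤ 6 * √(β / (κ * β)) + (2 * β * (1 + Real.log n)) ^ t * √(n : ℝ) :=
        dTV_succ_le hG hd (h.anti hκδ) hβn (by gcongr) hκβ t
    _ ≤ 6 * √(β / (κ * β)) + (n : ℝ)⁻¹ * √(n : ℝ) := by gcongr
    _ = 6 * (1 / √κ) + 1 / √(n : ℝ) := by
        rw [div_mul_cancel_right₀ hβ.ne', Real.sqrt_inv, ← one_div (√κ), inv_mul_eq_div,
          Real.sqrt_div_self, ← one_div (√(n : ℝ))]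
    _ ≤ 6 * (1 / √κ) + 1 / √κ := by gcongr
    _ = 7 / √κ := by ring

lemma mixingTime_le_of_smallSetDense {β δ κ ε : ℝ} (hG : G.IsRegularOfDegree d) (hd : 0 < d)
    (h : SmallSetDense (walkMatrix G d) β δ) (hβn : 1 ≤ β * n)
    (hlog : 4 * β * (1 + Real.log n) ^ 2 ≤ 1) (hκ : 2 ≤ κ) (hκβ : κ * β ≤ 1) (hκδ : κ * β ≤ δ)
    (hε : 7 / √κ ≤ ε) : (mixingTime G d ε : ℝ) ≤ 4 * Real.log n / Real.log β⁻¹ := by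
  have hβ : 0 < β := pos_of_mul_pos_left (one_pos.trans_le hβn) (Nat.cast_nonneg _)
  have hn : (0 : ℝ) < n := pos_of_mul_pos_right (one_pos.trans_le hβn) hβ.le
  have hβinv : 2 ≤ β⁻¹ := by
    rw [le_inv_comm₀ two_pos hβ]
    linarith [mul_le_mul_of_nonneg_right hκ hβ.le]
  have hℓ : 0 < Real.log β⁻¹ := Real.log_pos (by linarith)
  set t : ℕ := ⌈2 * Real.log n / Real.log β⁻¹⌉₊
  set ρ : ℝ := 2 * β * (1 + Real.log n)
  have hdecay : ρ ^ t ≤ (n : ℝ)⁻¹ := by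
    refine pow_le_inv_of_log_le hn hβ ?_ ((div_le_iff₀ hℓ).mp (Nat.le_ceil _))
    calc ρ ^ 2 = β * (4 * β * (1 + Real.log n) ^ 2) := by ring
      _ ≤ β := mul_le_of_le_one_right hβ.le hlog
  have hsucc : dTV G d (t + 1) ≤ ε :=
    (dTV_succ_le_of_pow_le_inv hG hd h hβn hκ hκβ hκδ hdecay).trans hε
  have hℓn : 1 ≤ Real.log n / Real.log β⁻¹ := by
    rw [one_le_div hℓ]
    exact Real.log_le_log (by positivity) ((inv_le_iff_one_le_mul₀' hβ).mpr hβn)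
  have hceil : (t : ℝ) < 2 * Real.log n / Real.log β⁻¹ + 1 := Nat.ceil_lt_add_one (by positivity)
  calc (mixingTime G d ε : ℝ) ≤ t + 1 := by exact_mod_cast Nat.sInf_le hsucc
    _ ≤ 2 * (Real.log n / Real.log β⁻¹) + 2 * (Real.log n / Real.log β⁻¹) := by
        rw [mul_div_assoc] at hceil
        linarith
    _ = 4 * Real.log n / Real.log β⁻¹ := by ring

end MixingTime

section Parameters

lemma one_add_log_le_mul_log {x y ξ : ℝ} (hx : 0 < x) (hξ : 0 < ξ) (hxy : x ^ ξ ≤ y)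
    (hy : 1 / 2 ≤ Real.log y) : 1 + Real.log x ≤ (2 + 1 / ξ) * Real.log y := by
  have hlogx : Real.log x ≤ 1 / ξ * Real.log y := by
    rw [one_div, le_inv_mul_iff₀ hξ, ← Real.log_rpow hx]
    exact Real.log_le_log (by positivity) hxy
  linarith

lemma half_le_log_of_two_le {x : ℝ} (hx : 2 ≤ x) : 1 / 2 ≤ Real.log x := by
  linarith [Real.log_two_gt_d9, Real.log_le_log two_pos hx]

lemma two_le_of_le_div_log {d : ℕ} {α C : ℝ} (hα : 0 < α) (h : α ≤ d / (C * Real.log d ^ 2)) :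
    2 ≤ d := by
  by_contra! hd
  refine hα.not_ge (h.trans_eq ?_)
  interval_cases d <;> simp

lemma seven_div_sqrt_two_add_le {ε : ℝ} (hε : 0 < ε) : 7 / √(2 + 49 / ε ^ 2) ≤ ε := by
  rw [div_le_comm₀ (by positivity) hε]
  refine Real.le_sqrt_of_sq_le ?_
  rw [div_pow]
  linarith

lemma natCast_rpow_le_self (n : ℕ) {ξ : ℝ} (hξ₀ : 0 < ξ) (hξ₁ : ξ ≤ 1) : (n : ℝ) ^ ξ ≤ n := by
  rcases n.eq_zero_or_pos with rfl | hn
  · simp [Real.zero_rpow hξ₀.ne']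
  · exact Real.rpow_le_self_of_one_le (by exact_mod_cast hn) hξ₁

lemma natCast_le_mul_of_sqrt_le {n d : ℕ} {α : ℝ} (hdn : (d : ℝ) ≤ n) (hα : √(d : ℝ) ≤ α) :
    (d : ℝ) ≤ α * n := by
  have hα₀ : 0 ≤ α := (Real.sqrt_nonneg _).trans hα
  have hsqrt : √(d : ℝ) ≤ n := Real.sqrt_le_iff.mpr
    ⟨by positivity, hdn.trans (by exact_mod_cast Nat.le_self_pow two_ne_zero n)⟩
  calc (d : ℝ) = √(d : ℝ) * √(d : ℝ) := (Real.mul_self_sqrt (by positivity)).symm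
    _ ≤ α * n := by gcongr

end Parameters

theorem mixing_time_upper_bound_of_small_set_bipartite_density_general
    (ξ ε : ℝ) (hξ : 0 < ξ) (hε : 0 < ε) :
    ∃ C₀ C₁ : ℝ, 0 < C₀ ∧ 0 < C₁ ∧
      ∀ (n d : ℕ) (G : SimpleGraph (Fin n)) [DecidableRel G.Adj] (α δ : ℝ),
        G.IsRegularOfDegree d → (n : ℝ) ^ ξ ≤ d → 0 < α → (d : ℝ) ≤ α * n →
        α ≤ d / (C₀ * Real.log d ^ 2) → C₀ * α / d ≤ δ → SmallSetBipDensity G d α δ →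
        (mixingTime G d ε : ℝ) ≤ C₁ * Real.log n / Real.log (d / α) := by
  set κ : ℝ := 2 + 49 / ε ^ 2
  set K : ℝ := 2 + 1 / ξ
  have hκ : 2 ≤ κ := le_add_of_nonneg_right (by positivity)
  refine ⟨4 * κ + 4 * K ^ 2, 4, by positivity, four_pos, ?_⟩
  intro n d G _ α δ hG hnd hα hαn hαd hδ hdens
  have hd₂ : 2 ≤ d := two_le_of_le_div_log hα hαd
  have hd : (0 : ℝ) < d := by positivity
  have hn : (0 : ℝ) < n := pos_of_mul_pos_right (hd.trans_le hαn) hα.le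
  set L : ℝ := Real.log d
  set β : ℝ := α / d with hβ
  have hβ₀ : 0 < β := by positivity
  have hL : 1 / 2 ≤ L := half_le_log_of_two_le (by exact_mod_cast hd₂)
  have hlog : 1 + Real.log n ≤ K * L := one_add_log_le_mul_log hn hξ hnd hL
  have hβL : (4 * κ + 4 * K ^ 2) * β * L ^ 2 ≤ 1 := by
    rw [le_div_iff₀ (by positivity), ← div_le_one hd] at hαd
    exact hαd.trans_eq' (by rw [hβ]; ring)
  have hκβ : κ * β ≤ κ * β * (4 * L ^ 2) :=
    le_mul_of_one_le_right (by positivity) (by nlinarith)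
  have hKβ : 4 * β * (1 + Real.log n) ^ 2 ≤ 4 * β * (K * L) ^ 2 := by gcongr
  rw [← inv_div α, ← hβ]
  refine mixingTime_le_of_smallSetDense hG (by omega) (hdens.smallSetDense (by omega)) ?_ ?_ hκ ?_
    ?_ (seven_div_sqrt_two_add_le hε)
  · rwa [div_mul_eq_mul_div, one_le_div hd]
  · have : 0 ≤ κ * β * L ^ 2 := by positivity
    linarith
  · have : 0 ≤ K ^ 2 * β * L ^ 2 := by positivity
    linarith
  · refine le_trans ?_ hδ
    rw [mul_div_assoc]
    gcongr
    linarith [sq_nonneg K]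

/-- small-set bipartite density implies `τ_{1/3}(P) ≲ log n / log(d/α)`. -/
theorem mixing_time_upper_bound_of_small_set_bipartite_density
    (ξ : ℝ) (hξ0 : 0 < ξ) (hξ1 : ξ ≤ 1) :
    ∃ C₀ C₁ : ℝ, 0 < C₀ ∧ 0 < C₁ ∧
      ∀ (n d : ℕ) (G : SimpleGraph (Fin n)) [DecidableRel G.Adj] (α δ : ℝ),
        G.IsRegularOfDegree d →
        (d : ℝ) = (n : ℝ) ^ ξ →
        Real.sqrt d < α → α ≤ d →
        α ≤ d / (C₀ * Real.log d ^ 2) →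
        0 < δ → δ ≤ 1 → C₀ * α / d ≤ δ →
        SmallSetBipDensity G d α δ →
        (mixingTime G d (1 / 3) : ℝ) ≤ C₁ * Real.log n / Real.log (d / α) := by
  obtain ⟨C₀, C₁, hC₀, hC₁, h⟩ :=
    mixing_time_upper_bound_of_small_set_bipartite_density_general ξ (1 / 3) hξ0 (by norm_num)
  refine ⟨C₀, C₁, hC₀, hC₁, fun n d G _ α δ hG hd hα _ hαd _ _ hδ hdens => ?_⟩
  have hdn : (d : ℝ) ≤ n := hd.trans_le (natCast_rpow_le_self n hξ0 hξ1)
  exact h n d G α δ hG hd.ge (hα.trans_le' (Real.sqrt_nonneg _))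
    (natCast_le_mul_of_sqrt_le hdn hα.le) hαd hδ hdens
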